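/- arXiv:1204.3468 — 2 statements merged into one kernel-verified Lean document; each statement's English description precedes it below -/
import Mathlib

section
/- Define I := ∫₀^{π/2}∫₀^{π/2}∫₀^{π/2}∫₀^{π/2} (1 − cos²φ₃) · (3/(8π²)) · sin φ₁ · sin²φ₂ · sin³φ₃ dφ₃ dφ₂ dφ₁ dθ and J := ∫₀^{π/2}∫₀^{π/2}∫₀^{π/2}∫₀^{π/2} √(1 − cos²φ₂ · sin²φ₃) · √(1 − cos²φ₃) · (3/(8π²)) · sin φ₁ · sin²φ₂ · sin³φ₃ dφ₃ dφ₂ dφ₁ dθ. Then 32 · (4/(3π))² · (5I + 20J) = (4/(81π⁴)) · [ 144π² − 10·Γ(1/4)⁴ + 45π³·( 8·F(2) − F(3) ) ], where F(b) := Σ_{k=0}^{∞} [ (−1/2)_k · (1/2)_k · (3/2)_k ] / [ (1)_k · (b)_k · k! ] and (a)_k is the Pochhammer symbol. (This is the second moment E(mw²) of the mean width of the projection of a unit 5-cube onto a uniformly random 4-subspace of ℝ⁵, equal to 3.516040901689803…) -/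
open Real

/-- The generalized hypergeometric value `₃F₂(−1/2, 1/2, 3/2; 1, b; 1)`, written as
an absolutely convergent series in Pochhammer symbols. -/
noncomputable def F3F2 (b : ℝ) : ℝ :=
  ∑' k : ℕ,
    ((ascPochhammer ℝ k).eval (-1/2) * (ascPochhammer ℝ k).eval (1/2) *
      (ascPochhammer ℝ k).eval (3/2)) /
    ((ascPochhammer ℝ k).eval 1 * (ascPochhammer ℝ k).eval b * (k.factorial : ℝ))

namespace MW

noncomputable def w (k : ℕ) : ℝ := ∏ j ∈ Finset.range k, ((j : ℝ) + 1/2) / (j + 1)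

lemma w_zero : w 0 = 1 := by simp [w]

lemma w_succ (k : ℕ) : w (k+1) = w k * (((k : ℝ) + 1/2) / (k + 1)) := by
  unfold w; rw [Finset.prod_range_succ]

lemma w_pos (k : ℕ) : 0 < w k := Finset.prod_pos fun j _ => by positivity

lemma tk_ne (k : ℕ) : (2 * (k:ℝ) - 1) ≠ 0 := by
  intro h
  have : (2 * (k:ℤ) - 1) = 0 := by exact_mod_cast h
  omega

lemma asc_half (k : ℕ) : (ascPochhammer ℝ k).eval (1/2) = w k * k.factorial := by
  induction k with
  | zero => simp [w_zero]
  | succ k ih =>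
    rw [ascPochhammer_succ_eval, ih, w_succ, Nat.factorial_succ]; push_cast; field_simp; ring

lemma asc_neg_half (k : ℕ) :
    (ascPochhammer ℝ k).eval (-1/2) = - w k * k.factorial / (2 * k - 1) := by
  induction k with
  | zero => simp [w_zero]
  | succ k ih =>
    have h1 := tk_ne k
    have h2 := tk_ne (k+1)
    push_cast at h2
    rw [ascPochhammer_succ_eval, ih, w_succ, Nat.factorial_succ]; push_cast
    field_simp; ring

lemma asc_three_half (k : ℕ) :
    (ascPochhammer ℝ k).eval (3/2) = w k * k.factorial * (2 * k + 1) := by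
  induction k with
  | zero => simp [w_zero]
  | succ k ih =>
    rw [ascPochhammer_succ_eval, ih, w_succ, Nat.factorial_succ]; push_cast
    field_simp; ring

lemma asc_one (k : ℕ) : (ascPochhammer ℝ k).eval 1 = k.factorial := by
  induction k with
  | zero => simp
  | succ k ih =>
    rw [ascPochhammer_succ_eval, ih, Nat.factorial_succ]; push_cast; ring

lemma asc_two (k : ℕ) : (ascPochhammer ℝ k).eval 2 = k.factorial * (k + 1) := by
  induction k with
  | zero => simp
  | succ k ih =>
    rw [ascPochhammer_succ_eval, ih, Nat.factorial_succ]; push_cast; ring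

lemma asc_three (k : ℕ) : (ascPochhammer ℝ k).eval 3 = k.factorial * (k + 1) * (k + 2) / 2 := by
  induction k with
  | zero => simp
  | succ k ih =>
    rw [ascPochhammer_succ_eval, ih, Nat.factorial_succ]; push_cast; ring

lemma F2_eq : F3F2 2 = ∑' k : ℕ, -(w k ^ 3) * (2 * k + 1) / ((2 * k - 1) * (k + 1)) := by
  unfold F3F2
  congr 1; ext k
  rw [asc_half, asc_neg_half, asc_three_half, asc_one, asc_two]
  have h1 := tk_ne k
  have h2 : (k.factorial : ℝ) ≠ 0 := by positivity
  field_simp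

lemma F3_eq : F3F2 3 =
    ∑' k : ℕ, -(w k ^ 3) * (2 * k + 1) * 2 / ((2 * k - 1) * (k + 1) * (k + 2)) := by
  unfold F3F2
  congr 1; ext k
  rw [asc_half, asc_neg_half, asc_three_half, asc_one, asc_three]
  have h1 := tk_ne k
  have h2 : (k.factorial : ℝ) ≠ 0 := by positivity
  field_simp

/-- comparison sequence -/
noncomputable def v (k : ℕ) : ℝ := 1 / √(2 * k + 1)

lemma v_pos (k : ℕ) : 0 < v k := by unfold v; positivity

lemma v_sq (k : ℕ) : v k ^ 2 = 1 / (2 * k + 1) := by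
  unfold v; rw [div_pow, Real.sq_sqrt (by positivity)]; simp

lemma w_sq_le (k : ℕ) : w k ^ 2 * (2 * k + 1) ≤ 1 := by
  induction k with
  | zero => simp [w_zero]
  | succ k ih =>
    rw [w_succ]; push_cast
    refine le_trans ?_ ih
    rw [mul_pow, mul_assoc]
    apply mul_le_mul_of_nonneg_left _ (by positivity)
    rw [div_pow, div_mul_eq_mul_div, div_le_iff₀ (by positivity)]
    have : (0:ℝ) ≤ k := by positivity
    nlinarith

lemma w_le_v (k : ℕ) : w k ≤ v k := by
  apply le_of_sq_le_sq _ (v_pos k).le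
  rw [v_sq, le_div_iff₀ (by positivity)]
  exact w_sq_le k

lemma v_cube_le (k : ℕ) : v k ^ 3 ≤ 1 / ((k + 1 : ℕ) : ℝ) ^ (3/2 : ℝ) := by
  have h : ((k + 1 : ℕ) : ℝ) ^ (3/2 : ℝ) = √((k:ℝ)+1) ^ 3 := by
    rw [Real.sqrt_eq_rpow, ← Real.rpow_natCast, ← Real.rpow_mul (by positivity)]
    push_cast; norm_num
  rw [h]
  unfold v
  rw [div_pow, one_pow]
  gcongr
  linarith [(Nat.cast_nonneg k : (0:ℝ) ≤ k)]

lemma summable_v3 : Summable fun k => v k ^ 3 := by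
  have h : Summable fun k : ℕ => 1 / ((k + 1 : ℕ) : ℝ) ^ (3/2 : ℝ) :=
    (summable_nat_add_iff 1).2 (Real.summable_one_div_nat_rpow.2 (by norm_num))
  exact Summable.of_nonneg_of_le (fun k => (pow_pos (v_pos k) 3).le) v_cube_le h

lemma w3_le (k : ℕ) : w k ^ 3 ≤ v k ^ 3 := by
  have := w_le_v k
  have := w_pos k
  gcongr

lemma summable_w3 : Summable fun k => w k ^ 3 :=
  Summable.of_nonneg_of_le (fun k => (pow_pos (w_pos k) 3).le) w3_le summable_v3

lemma tendsto_v : Filter.Tendsto v Filter.atTop (nhds 0) := by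
  have h1 : Filter.Tendsto (fun k : ℕ => 2 * (k:ℝ) + 1) Filter.atTop Filter.atTop :=
    Filter.tendsto_atTop_add_const_right _ _
      (Filter.Tendsto.const_mul_atTop (by norm_num) tendsto_natCast_atTop_atTop)
  have := (Real.tendsto_sqrt_atTop.comp h1).inv_tendsto_atTop
  refine this.congr fun k => ?_
  simp [v]

lemma tendsto_kw3 : Filter.Tendsto (fun k : ℕ => ((k:ℝ) + 1) * w k ^ 3) Filter.atTop (nhds 0) := by
  refine squeeze_zero (fun k => by have := w_pos k; positivity) (fun k => ?_) tendsto_v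
  have h1 := w3_le k
  have h2 : v k ^ 3 = v k / (2 * k + 1) := by
    rw [pow_succ, v_sq]; ring
  calc ((k:ℝ) + 1) * w k ^ 3 ≤ (2 * k + 1) * v k ^ 3 := by
        have : (0:ℝ) ≤ k := by positivity
        have := w_pos k
        gcongr; linarith
    _ = v k := by rw [h2]; field_simp

lemma abs_tk_inv (k : ℕ) : 1 / |2 * (k:ℝ) - 1| ≤ 3 / (2 * k + 1) := by
  rcases k with _ | k
  · norm_num
  · push_cast
    have : (0:ℝ) ≤ k := by positivity
    rw [abs_of_nonneg (by linarith), div_le_div_iff₀ (by linarith) (by linarith)]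
    linarith

/-- telescoping -/
lemma hasSum_tele (T : ℕ → ℝ) (hT : Filter.Tendsto T Filter.atTop (nhds 0)) (h0 : T 0 = 0)
    (f : ℕ → ℝ) (hf : ∀ k, f k = T (k+1) - T k) (hs : Summable f) : ∑' k, f k = 0 := by
  have h1 := hs.hasSum.tendsto_sum_nat
  have h2 : ∀ n, ∑ k ∈ Finset.range n, f k = T n := fun n => by
    simp_rw [hf]; rw [Finset.sum_range_sub, h0, sub_zero]
  simp_rw [h2] at h1
  exact tendsto_nhds_unique h1 hT

/-! Dixon -/
noncomputable def q (n j : ℕ) : ℝ :=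
  (2 * n + j + 1/2) * (j + 1/2) ^ 2 / ((2 * n + 1 + j) ^ 2 * (j + 1))

noncomputable def g (n k : ℕ) : ℝ := ∏ j ∈ Finset.range k, q n j

lemma g_succ (n k : ℕ) : g n (k+1) = g n k * q n k := by
  simp [g, Finset.prod_range_succ]

lemma q_nonneg (n j : ℕ) : 0 ≤ q n j := by unfold q; positivity

lemma g_nonneg (n k : ℕ) : 0 ≤ g n k := Finset.prod_nonneg fun j _ => q_nonneg n j

lemma g_zero (k : ℕ) : g 0 k = w k ^ 3 := by
  unfold g w
  rw [← Finset.prod_pow]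
  refine Finset.prod_congr rfl fun j _ => ?_
  unfold q
  push_cast
  field_simp
  ring

lemma q_le (n j : ℕ) : q n j ≤ q 0 j := by
  unfold q
  have hn : (0:ℝ) ≤ n := by positivity
  have hj : (0:ℝ) ≤ j := by positivity
  push_cast
  rw [div_le_div_iff₀ (by positivity) (by positivity)]
  have : (2 * (n:ℝ) + j + 1/2) * (2 * 0 + 1 + j) ^ 2 ≤ (2 * 0 + j + 1/2) * (2 * n + 1 + j) ^ 2 := by
    have h3 : 0 ≤ (n:ℝ) * j := by positivity
    nlinarith [mul_nonneg h3 hj, mul_nonneg h3 hn, mul_nonneg hn hn]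
  have h4 : (0:ℝ) ≤ (j + 1/2) ^ 2 * (j + 1) := by positivity
  nlinarith [mul_le_mul_of_nonneg_right this h4]

lemma g_le (n k : ℕ) : g n k ≤ w k ^ 3 := by
  rw [← g_zero]
  exact Finset.prod_le_prod (fun j _ => q_nonneg n j) (fun j _ => q_le n j)

lemma g_shift (n k : ℕ) : g (n+1) k = g n k *
    ((2*n+k+1/2)*(2*n+k+3/2)/((2*n+1/2)*(2*n+3/2))*
      ((2*n+1)*(2*n+2)/((2*n+1+k)*(2*n+2+k)))^2) := by
  induction k with
  | zero => simp [g]; field_simp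
  | succ k ih =>
    rw [g_succ, g_succ, ih]
    unfold q
    push_cast
    field_simp
    ring

noncomputable def H (n k : ℕ) : ℝ :=
  -(k * (16*n^2+12*n+3/2+(12*n+5)*k+2*k^2)/((4*n+1)*(2*n+1+k)^2)) * g n k

lemma g_tele (n k : ℕ) :
    g n k - (((n:ℝ)+3/4)^2/((n+1/2)*(n+1)))^2 * g (n+1) k = H n (k+1) - H n k := by
  rw [g_shift]
  unfold H
  rw [g_succ]
  unfold q
  push_cast
  generalize g n k = G
  have : (0:ℝ) ≤ n := by positivity
  have : (0:ℝ) ≤ k := by positivity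
  field_simp
  ring

lemma summable_g (n : ℕ) : Summable (g n) :=
  Summable.of_nonneg_of_le (g_nonneg n) (g_le n) summable_w3

lemma tendsto_H (n : ℕ) : Filter.Tendsto (H n) Filter.atTop (nhds 0) := by
  rw [tendsto_zero_iff_abs_tendsto_zero]
  have := (tendsto_kw3.const_mul (16*(n:ℝ)^2+12*n+3/2+(12*n+5)+2))
  rw [mul_zero] at this
  refine squeeze_zero (fun k => abs_nonneg _) (fun k => ?_) this
  unfold H
  have hg := g_nonneg n k
  have hn : (0:ℝ) ≤ n := by positivity
  have hk : (0:ℝ) ≤ k := by positivity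
  simp only [Function.comp]
  rw [neg_mul, abs_neg, abs_of_nonneg (by positivity), ← mul_assoc]
  refine mul_le_mul ?_ (g_le n k) hg (by positivity)
  rw [div_le_iff₀ (by positivity)]
  have e1 : (k:ℝ) * (16*n^2+12*n+3/2+(12*n+5)*k+2*k^2) ≤
      (k+1) * ((16*n^2+12*n+3/2+(12*n+5)+2) * (k+1)^2) := by
    refine mul_le_mul (by linarith) ?_ (by positivity) (by positivity)
    nlinarith [mul_nonneg hn hk, mul_nonneg (mul_nonneg hn hk) hk, mul_nonneg (mul_nonneg hn hk) hn,
      mul_nonneg (mul_nonneg (mul_nonneg hn hk) hn) hk, mul_nonneg hk hk]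
  have e2 : ((k:ℝ)+1)^2 ≤ (4*n+1)*(2*n+1+k)^2 := by
    have : ((k:ℝ)+1)^2 ≤ (2*n+1+k)^2 := pow_le_pow_left₀ (by positivity) (by linarith) 2
    nlinarith [sq_nonneg (2*(n:ℝ)+1+k)]
  calc _ ≤ _ := e1
    _ = (16*(n:ℝ)^2+12*n+3/2+(12*n+5)+2) * (k+1) * (k+1)^2 := by ring
    _ ≤ _ := by gcongr

lemma f_rec (n : ℕ) : ∑' k, g n k = (((n:ℝ)+3/4)^2/((n+1/2)*(n+1)))^2 * ∑' k, g (n+1) k := by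
  have hs := (summable_g n).sub ((summable_g (n+1)).mul_left ((((n:ℝ)+3/4)^2/((n+1/2)*(n+1)))^2))
  have h := hasSum_tele (H n) (tendsto_H n) (by simp [H]) _ (g_tele n) hs
  rw [(summable_g n).tsum_sub ((summable_g (n+1)).mul_left _), tsum_mul_left] at h
  linarith

lemma f_prod (N : ℕ) : ∑' k, g 0 k =
    (∏ n ∈ Finset.range N, (((n:ℝ)+3/4)^2/((n+1/2)*(n+1)))^2) * ∑' k, g N k := by
  induction N with
  | zero => simp
  | succ N ih => rw [ih, Finset.prod_range_succ, f_rec N]; ring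

lemma tendsto_q (j : ℕ) : Filter.Tendsto (fun n => q n j) Filter.atTop (nhds 0) := by
  have h1 : Filter.Tendsto (fun n : ℕ => 2 * (n:ℝ) + (1 + j)) Filter.atTop Filter.atTop :=
    Filter.tendsto_atTop_add_const_right _ _
      (Filter.Tendsto.const_mul_atTop (by norm_num) tendsto_natCast_atTop_atTop)
  have := h1.inv_tendsto_atTop.const_mul ((((j:ℝ) + 1/2) ^ 2)/(j+1))
  rw [mul_zero] at this
  refine squeeze_zero (fun n => q_nonneg n j) (fun n => ?_) this
  unfold q
  simp only [Pi.inv_apply]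
  rw [← div_eq_mul_inv, div_div, div_le_div_iff₀ (by positivity) (by positivity)]
  have hn : (0:ℝ) ≤ n := by positivity
  have hj : (0:ℝ) ≤ j := by positivity
  have : (0:ℝ) ≤ (j + 1/2) ^ 2 * (j+1) * (2 * n + 1 + j) * (1/2) := by positivity
  nlinarith

lemma tendsto_g (k : ℕ) : Filter.Tendsto (fun n => g n k) Filter.atTop (nhds (if k = 0 then 1 else 0)) := by
  have := tendsto_finsetProd (Finset.range k) (fun j _ => tendsto_q j)
  unfold g
  convert this using 2
  rcases k with _ | k <;> simp

lemma tendsto_f : Filter.Tendsto (fun n => ∑' k, g n k) Filter.atTop (nhds 1) := by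
  have := tendsto_tsum_of_dominated_convergence (𝓕 := Filter.atTop) (f := fun n k => g n k)
    (g := fun k => if k = 0 then (1:ℝ) else 0) summable_w3 tendsto_g
    (Filter.Eventually.of_forall fun n k => by
      rw [Real.norm_of_nonneg (g_nonneg n k)]; exact g_le n k)
  simpa using this

lemma prod_gamma (N : ℕ) (hN : N ≠ 0) :
    ∏ n ∈ Finset.range (N+1), (((n:ℝ)+3/4)^2/((n+1/2)*(n+1)))^2
      = (Real.GammaSeq (1/2) N * Real.GammaSeq 1 N / Real.GammaSeq (3/4) N ^ 2) ^ 2 := by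
  unfold Real.GammaSeq
  rw [Finset.prod_pow]
  congr 1
  rw [Finset.prod_div_distrib, Finset.prod_mul_distrib, Finset.prod_pow]
  have hN' : (0:ℝ) < N := by positivity
  have e : ((N:ℝ) ^ (3/4:ℝ)) ^ 2 = (N:ℝ) ^ (1/2:ℝ) * (N:ℝ) ^ (1:ℝ) := by
    rw [← Real.rpow_add hN', ← Real.rpow_natCast, ← Real.rpow_mul hN'.le]; norm_num
  simp_rw [add_comm (1/2:ℝ), add_comm (1:ℝ), add_comm (3/4:ℝ)]
  rw [div_pow, mul_pow, e]
  have h1 : (∏ n ∈ Finset.range (N+1), ((n:ℝ) + 1/2)) ≠ 0 :=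
    Finset.prod_ne_zero_iff.2 fun j _ => by positivity
  have h2 : (∏ n ∈ Finset.range (N+1), ((n:ℝ) + 1)) ≠ 0 :=
    Finset.prod_ne_zero_iff.2 fun j _ => by positivity
  have h3 : (∏ n ∈ Finset.range (N+1), ((n:ℝ) + 3/4)) ≠ 0 :=
    Finset.prod_ne_zero_iff.2 fun j _ => by positivity
  have h4 : (N:ℝ) ^ (1/2:ℝ) ≠ 0 := by positivity
  have h5 : (N:ℝ) ^ (1:ℝ) ≠ 0 := by positivity
  have h6 : (N.factorial:ℝ) ≠ 0 := by positivity
  generalize (N:ℝ) ^ (1/2:ℝ) = a at *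
  generalize (N:ℝ) ^ (1:ℝ) = b at *
  generalize (∏ n ∈ Finset.range (N+1), ((n:ℝ) + 1/2)) = x at *
  generalize (∏ n ∈ Finset.range (N+1), ((n:ℝ) + 1)) = y at *
  generalize (∏ n ∈ Finset.range (N+1), ((n:ℝ) + 3/4)) = z at *
  field_simp

lemma S_eq : ∑' k, w k ^ 3 = Real.Gamma (1/4) ^ 4 / (4 * π ^ 3) := by
  have hlim : Filter.Tendsto (fun N : ℕ => (∏ n ∈ Finset.range (N+1), (((n:ℝ)+3/4)^2/((n+1/2)*(n+1)))^2))
      Filter.atTop (nhds ((Real.Gamma (1/2) * Real.Gamma 1 / Real.Gamma (3/4) ^ 2) ^ 2)) := by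
    have h3 : Real.Gamma (3/4) ≠ 0 := (Real.Gamma_pos_of_pos (by norm_num)).ne'
    have := ((((Real.GammaSeq_tendsto_Gamma (1/2)).mul (Real.GammaSeq_tendsto_Gamma 1)).div
      ((Real.GammaSeq_tendsto_Gamma (3/4)).pow 2) (pow_ne_zero 2 h3)).pow 2)
    refine this.congr' ?_
    filter_upwards [Filter.eventually_ne_atTop 0] with N hN
    rw [prod_gamma N hN]; rfl
  have h2 := hlim.mul (tendsto_f.comp (Filter.tendsto_add_atTop_nat 1))
  have h3 : Filter.Tendsto (fun _ : ℕ => ∑' k, g 0 k) Filter.atTop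
      (nhds ((Real.Gamma (1/2) * Real.Gamma 1 / Real.Gamma (3/4) ^ 2) ^ 2 * 1)) :=
    h2.congr fun N => (f_prod (N+1)).symm
  have h4 := tendsto_nhds_unique tendsto_const_nhds h3
  simp_rw [g_zero] at h4
  rw [h4, Real.Gamma_one_half_eq, Real.Gamma_one]
  have hr := Real.Gamma_mul_Gamma_one_sub (1/4)
  rw [show π * (1/4) = π / 4 by ring, Real.sin_pi_div_four, show (1:ℝ) - 1/4 = 3/4 by norm_num] at hr
  have hp : 0 < Real.Gamma (3/4) := Real.Gamma_pos_of_pos (by norm_num)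
  have h5 : (Real.Gamma (1/4) * Real.Gamma (3/4)) ^ 4 = 4 * π ^ 4 := by
    rw [hr, div_pow, div_pow, show √2 ^ 4 = (√2^2)^2 by ring, Real.sq_sqrt (by norm_num)]
    field_simp; norm_num
  have hpi := Real.pi_pos
  rw [div_pow, mul_one, mul_one, Real.sq_sqrt hpi.le] 
  rw [div_eq_div_iff (by positivity) (by positivity)]
  rw [mul_pow] at h5
  linarith

noncomputable def Gt (k : ℕ) : ℝ :=
  -(w k ^ 3) * 2 * (2 * k + 1) * (2 * k + 3) / (3 * (2 * k - 1) * (k + 1) ^ 2 * (k + 2))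

lemma summable_aux (r : ℕ → ℝ) (C : ℝ) (hr : ∀ k, |r k| ≤ C) :
    Summable fun k : ℕ => w k ^ 3 * ((2 * k + 1) / (2 * k - 1)) * r k := by
  refine Summable.of_norm_bounded (summable_w3.mul_right (3 * C)) fun k => ?_
  have hw := w_pos k
  rw [Real.norm_eq_abs, abs_mul, abs_mul, abs_of_pos (pow_pos hw 3), abs_div, mul_assoc]
  have h := abs_tk_inv k
  have h2 : |2 * (k:ℝ) + 1| / |2 * (k:ℝ) - 1| ≤ 3 := by
    rw [abs_of_pos (by positivity : (0:ℝ) < 2 * k + 1), div_eq_mul_one_div]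
    calc _ ≤ (2 * (k:ℝ) + 1) * (3 / (2 * k + 1)) := by gcongr
      _ = 3 := by field_simp
  have h3 := hr k
  gcongr

lemma summable_F2 : Summable fun k : ℕ => -(w k ^ 3) * (2 * k + 1) / ((2 * k - 1) * ((k:ℝ) + 1)) := by
  refine (summable_aux (fun k => -(1 / (k + 1))) 1 fun k => ?_).congr fun k => ?_
  · rw [abs_neg, abs_of_pos (by positivity), div_le_one (by positivity)]; simp
  · have := tk_ne k
    field_simp

lemma summable_F3 : Summable fun k : ℕ =>
    -(w k ^ 3) * (2 * k + 1) * 2 / ((2 * k - 1) * ((k:ℝ) + 1) * (k + 2)) := by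
  refine (summable_aux (fun k => -(2 / ((k + 1) * (k + 2)))) 1 fun k => ?_).congr fun k => ?_
  · rw [abs_neg, abs_of_pos (by positivity), div_le_one (by positivity)]
    nlinarith [(Nat.cast_nonneg k : (0:ℝ) ≤ k)]
  · have := tk_ne k
    field_simp

lemma summable_Gt : Summable Gt := by
  refine (summable_aux (fun k => -(2 * (2 * k + 3) / (3 * (k + 1) ^ 2 * (k + 2)))) 1
    fun k => ?_).congr fun k => ?_
  · rw [abs_neg, abs_of_pos (by positivity), div_le_one (by positivity)]
    have : (0:ℝ) ≤ k := Nat.cast_nonneg k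
    nlinarith [mul_nonneg this this, mul_nonneg (mul_nonneg this this) this]
  · have := tk_ne k
    unfold Gt
    field_simp

noncomputable def T (k : ℕ) : ℝ :=
  k * (-144 - 256 * k - 64 * k ^ 2) / ((2 * k - 1) * (k + 1)) * w k ^ 3

lemma tendsto_T : Filter.Tendsto T Filter.atTop (nhds 0) := by
  rw [tendsto_zero_iff_abs_tendsto_zero]
  have := tendsto_kw3.const_mul (3 * 464)
  rw [mul_zero] at this
  refine squeeze_zero (fun k => abs_nonneg _) (fun k => ?_) this
  have hw := w_pos k
  have hk : (0:ℝ) ≤ k := Nat.cast_nonneg k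
  simp only [Function.comp, T]
  rw [abs_mul, abs_of_pos (pow_pos hw 3), ← mul_assoc]
  refine mul_le_mul_of_nonneg_right ?_ (by positivity)
  have e : (k:ℝ) * (-144 - 256 * k - 64 * k ^ 2) / ((2 * k - 1) * (k + 1)) =
    -((k:ℝ) * (144 + 256 * k + 64 * k ^ 2) / (k + 1) * (1 / (2 * k - 1))) := by
      have := tk_ne k
      field_simp
      ring
  rw [e, abs_neg, abs_mul, abs_of_nonneg (by positivity), abs_div, abs_one]
  calc _ ≤ (k:ℝ) * (144 + 256 * k + 64 * k ^ 2) / (k + 1) * (3 / (2 * k + 1)) := by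
        have := abs_tk_inv k
        gcongr
    _ ≤ _ := by
        rw [div_mul_div_comm, div_le_iff₀ (by positivity)]
        nlinarith [mul_nonneg hk hk, mul_nonneg (mul_nonneg hk hk) hk]

lemma relation : 81 * ∑' k, Gt k = -16 * ∑' k, w k ^ 3 + 144 * F3F2 2 - 18 * F3F2 3 := by
  rw [F2_eq, F3_eq]
  have s1 := summable_Gt.mul_left 81
  have s2 := summable_w3.mul_left 16
  have s3 := summable_F2.mul_left 144
  have s4 := summable_F3.mul_left 18
  have h := hasSum_tele T tendsto_T (by simp [T]) _ (fun k => ?_) (((s1.add s2).sub s3).add s4)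
  · rw [((s1.add s2).sub s3).tsum_add s4, (s1.add s2).tsum_sub s3, s1.tsum_add s2, tsum_mul_left,
      tsum_mul_left, tsum_mul_left, tsum_mul_left] at h
    linarith
  · unfold T Gt
    rw [w_succ]
    have h1 := tk_ne k
    have h2 := tk_ne (k+1)
    push_cast at h2 ⊢
    generalize w k = W
    have h3 : 2 * (k:ℝ) + 1 ≠ 0 := by positivity
    have h4 : 2 * ((k:ℝ) + 1) - 1 = 2 * k + 1 := by ring
    rw [h4]
    field_simp
    ring

/-! integrals -/

lemma hasSum_cg {f g : ℕ → ℝ} {a : ℝ} (h : HasSum f a) (e : ∀ k, g k = f k) : HasSum g a := by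
  rw [show g = f from funext e]; exact h

lemma sqrt_hasSum {x : ℝ} (h0 : 0 ≤ x) (h1 : x < 1) :
    HasSum (fun k : ℕ => -(w k / (2 * k - 1)) * x ^ k) (√(1 - x)) := by
  have h := Real.one_div_one_sub_rpow_hasFPowerSeriesOnBall_zero (-1/2)
  have h2 := h.hasSum (y := x) (by simp [enorm_eq_nnnorm]; rw [← NNReal.coe_lt_coe]; simp [abs_of_nonneg h0, h1])
  have e : 1 / (1 - (0 + x)) ^ (-1/2 : ℝ) = √(1 - x) := by
    rw [zero_add, Real.sqrt_eq_rpow, neg_div, Real.rpow_neg (by linarith), one_div, inv_inv]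
  rw [e] at h2
  refine hasSum_cg h2 fun k => ?_
  rw [FormalMultilinearSeries.ofScalars_apply_eq]
  have : Ring.choose (-1/2 + (k:ℝ) - 1) k = -(w k / (2 * k - 1)) := by
    unfold Ring.choose
    have h3 := Ring.factorial_nsmul_multichoose_eq_ascPochhammer (-1/2:ℝ) k
    rw [show (-1/2 + (k:ℝ) - 1) - k + 1 = -1/2 by ring]
    rw [Polynomial.ascPochhammer_smeval_eq_eval, asc_neg_half, nsmul_eq_mul] at h3
    have hf : (k.factorial : ℝ) ≠ 0 := by positivity
    apply mul_left_cancel₀ hf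
    rw [h3]; ring
  rw [this, smul_eq_mul]

lemma int_sin (m : ℕ) : ∫ x in (0:ℝ)..(π/2), Real.sin x ^ (2 * m) = π / 2 * w m := by
  induction m with
  | zero => simp [w_zero]
  | succ m ih =>
    rw [show 2 * (m + 1) = 2 * m + 2 by ring, integral_sin_pow, ih, w_succ]
    simp
    field_simp

lemma int_cos (m : ℕ) : ∫ x in (0:ℝ)..(π/2), Real.cos x ^ (2 * m) = π / 2 * w m := by
  rw [← int_sin]
  have := intervalIntegral.integral_comp_sub_left (a := 0) (b := π/2) (fun x => Real.sin x ^ (2*m)) (π/2)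
  simpa [Real.sin_pi_div_two_sub] using this

lemma int_cos_sin (m : ℕ) :
    ∫ x in (0:ℝ)..(π/2), Real.cos x ^ (2 * m) * Real.sin x ^ 2 = π / 4 * (w m / (m + 1)) := by
  have e : ∀ x : ℝ, Real.cos x ^ (2 * m) * Real.sin x ^ 2 =
      Real.cos x ^ (2 * m) - Real.cos x ^ (2 * (m + 1)) := fun x => by
    rw [Real.sin_sq]; ring
  simp_rw [e]
  rw [intervalIntegral.integral_sub (Continuous.intervalIntegrable (by fun_prop) _ _)
    (Continuous.intervalIntegrable (by fun_prop) _ _), int_cos, int_cos, w_succ]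
  field_simp
  ring

noncomputable def al (k : ℕ) : ℝ := -(w k / (2 * k - 1))

lemma abs_al (k : ℕ) : |al k| ≤ 3 * v k ^ 3 := by
  unfold al
  have hw := w_pos k
  rw [abs_neg, abs_div, abs_of_pos hw, div_eq_mul_one_div]
  calc _ ≤ v k * (3 / (2 * k + 1)) := by
        have := abs_tk_inv k
        have := w_le_v k
        have := v_pos k
        gcongr
    _ = _ := by rw [pow_succ, v_sq]; ring

lemma summable_al : Summable fun k => 3 * v k ^ 3 := summable_v3.mul_left 3

lemma inner_hasSum (c : ℝ) (hc : c ^ 2 ≤ 1) :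
    HasSum (fun k => al k * c ^ (2 * k) * (π / 2 * w (k + 2)))
      (∫ y in (0:ℝ)..(π/2), √(1 - c ^ 2 * Real.sin y ^ 2) * Real.sin y ^ 4) := by
  have key := intervalIntegral.hasSum_integral_of_dominated_convergence
    (μ := MeasureTheory.volume) (a := 0) (b := π/2)
    (F := fun (k : ℕ) y => al k * c ^ (2 * k) * Real.sin y ^ (2 * (k + 2)))
    (f := fun y => √(1 - c ^ 2 * Real.sin y ^ 2) * Real.sin y ^ 4)
    (fun k _ => 3 * v k ^ 3)
    (fun k => Continuous.aestronglyMeasurable (by fun_prop))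
    (fun k => Filter.Eventually.of_forall fun y _ => ?_)
    (Filter.Eventually.of_forall fun y _ => summable_al)
    (by simp)
    ?_
  · simp_rw [intervalIntegral.integral_const_mul, int_sin] at key
    exact key
  · rw [Real.norm_eq_abs, abs_mul, abs_mul]
    have h1 : |c ^ (2 * k)| ≤ 1 := by
      rw [pow_mul, abs_of_nonneg (by positivity)]; exact pow_le_one₀ (by positivity) hc
    have h2 : |Real.sin y ^ (2 * (k + 2))| ≤ 1 := by
      rw [abs_pow]; exact pow_le_one₀ (abs_nonneg _) (Real.abs_sin_le_one y)
    calc _ ≤ |al k| * 1 * 1 := by gcongr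
      _ ≤ _ := by rw [mul_one, mul_one]; exact abs_al k
  · have hae : ∀ᵐ y : ℝ, y ≠ π / 2 := by
      simp [MeasureTheory.ae_iff]
    filter_upwards [hae] with y hy hmem
    rw [Set.uIoc_of_le (by positivity)] at hmem
    have hlt : y < π / 2 := lt_of_le_of_ne hmem.2 hy
    have hcos : 0 < Real.cos y := Real.cos_pos_of_mem_Ioo ⟨by linarith [hmem.1, Real.pi_pos], hlt⟩
    have hs : Real.sin y ^ 2 < 1 := by rw [Real.sin_sq]; nlinarith
    have := (sqrt_hasSum (x := c ^ 2 * Real.sin y ^ 2) (by positivity)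
      (by nlinarith [sq_nonneg (Real.sin y), sq_nonneg c])).mul_right (Real.sin y ^ 4)
    refine hasSum_cg this fun k => ?_
    unfold al
    rw [mul_pow, ← pow_mul, ← pow_mul]
    ring

lemma w_le_one (k : ℕ) : w k ≤ 1 := by
  have h := w_sq_le k
  have hw := w_pos k
  have hk : (0:ℝ) ≤ k := Nat.cast_nonneg k
  nlinarith [mul_nonneg (sq_nonneg (w k)) hk]

lemma outer_hasSum :
    HasSum (fun k : ℕ => al k * (π / 2 * w (k + 2)) * (π / 4 * (w k / (k + 1))))
      (∫ x in (0:ℝ)..(π/2), ∫ y in (0:ℝ)..(π/2),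
        √(1 - Real.cos x ^ 2 * Real.sin y ^ 2) * Real.sin y ^ 4 * Real.sin x ^ 2) := by
  simp_rw [intervalIntegral.integral_mul_const]
  have key := intervalIntegral.hasSum_integral_of_dominated_convergence
    (μ := MeasureTheory.volume) (a := 0) (b := π/2)
    (F := fun (k : ℕ) x => al k * (π / 2 * w (k + 2)) * (Real.cos x ^ (2 * k) * Real.sin x ^ 2))
    (f := fun x => (∫ y in (0:ℝ)..(π/2),
        √(1 - Real.cos x ^ 2 * Real.sin y ^ 2) * Real.sin y ^ 4) * Real.sin x ^ 2)
    (fun k _ => 3 * v k ^ 3 * (π / 2))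
    (fun k => Continuous.aestronglyMeasurable (by fun_prop))
    (fun k => Filter.Eventually.of_forall fun x _ => ?_)
    (Filter.Eventually.of_forall fun y _ => summable_al.mul_right _)
    (by simp)
    (Filter.Eventually.of_forall fun x _ => ?_)
  · simp_rw [intervalIntegral.integral_const_mul, int_cos_sin] at key
    exact key
  · rw [Real.norm_eq_abs, abs_mul, abs_mul]
    have h0 := abs_al k
    have h1 : |π / 2 * w (k + 2)| ≤ π / 2 := by
      have := w_pos (k+2)
      rw [abs_of_nonneg (by positivity)]
      exact mul_le_of_le_one_right (by positivity) (w_le_one _)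
    have h2 : |Real.cos x ^ (2 * k) * Real.sin x ^ 2| ≤ 1 := by
      rw [abs_mul, abs_pow, abs_pow]
      exact mul_le_one₀ (pow_le_one₀ (abs_nonneg _) (Real.abs_cos_le_one x)) (by positivity)
        (pow_le_one₀ (abs_nonneg _) (Real.abs_sin_le_one x))
    have := v_pos k
    calc _ ≤ (3 * v k ^ 3) * (π / 2) * 1 := by gcongr
      _ = _ := mul_one _
  · have := (inner_hasSum (Real.cos x) (Real.cos_sq_le_one x)).mul_right (Real.sin x ^ 2)
    refine hasSum_cg this fun k => ?_
    ring

lemma K_eq : (∫ x in (0:ℝ)..(π/2), ∫ y in (0:ℝ)..(π/2),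
        √(1 - Real.cos x ^ 2 * Real.sin y ^ 2) * Real.sin y ^ 4 * Real.sin x ^ 2)
      = 3 * π ^ 2 / 64 * ∑' k, Gt k := by
  rw [← outer_hasSum.tsum_eq, ← tsum_mul_left]
  congr 1; ext k
  unfold al Gt
  rw [w_succ, w_succ]
  have h1 := tk_ne k
  push_cast
  have h2 : (k:ℝ) + 1 + 1 ≠ 0 := by positivity
  field_simp
  ring

lemma J_eq : (∫ _θ in (0:ℝ)..(π/2), ∫ φ₁ in (0:ℝ)..(π/2), ∫ φ₂ in (0:ℝ)..(π/2),
              ∫ φ₃ in (0:ℝ)..(π/2),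
              Real.sqrt (1 - Real.cos φ₂ ^ 2 * Real.sin φ₃ ^ 2) *
                Real.sqrt (1 - Real.cos φ₃ ^ 2) * (3 / (8 * π ^ 2)) *
                (Real.sin φ₁ * Real.sin φ₂ ^ 2 * Real.sin φ₃ ^ 3))
    = π / 2 * (3 / (8 * π ^ 2)) * (3 * π ^ 2 / 64 * ∑' k, Gt k) := by
  have e : ∀ φ₁ φ₂ : ℝ, (∫ φ₃ in (0:ℝ)..(π/2),
              Real.sqrt (1 - Real.cos φ₂ ^ 2 * Real.sin φ₃ ^ 2) *
                Real.sqrt (1 - Real.cos φ₃ ^ 2) * (3 / (8 * π ^ 2)) *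
                (Real.sin φ₁ * Real.sin φ₂ ^ 2 * Real.sin φ₃ ^ 3))
      = (3 / (8 * π ^ 2)) * Real.sin φ₁ * ∫ y in (0:ℝ)..(π/2),
        √(1 - Real.cos φ₂ ^ 2 * Real.sin y ^ 2) * Real.sin y ^ 4 * Real.sin φ₂ ^ 2 := by
    intro a b
    rw [← intervalIntegral.integral_const_mul]
    refine intervalIntegral.integral_congr fun y hy => ?_
    rw [Set.uIcc_of_le (by positivity)] at hy
    have hs : 0 ≤ Real.sin y := Real.sin_nonneg_of_nonneg_of_le_pi hy.1 (by linarith [hy.2, Real.pi_pos])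
    have : √(1 - Real.cos y ^ 2) = Real.sin y := by
      rw [← Real.sin_sq, Real.sqrt_sq hs]
    simp only [this]
    ring
  simp_rw [e]
  have e2 : ∀ φ₁ : ℝ, (∫ φ₂ in (0:ℝ)..(π/2), (3 / (8 * π ^ 2)) * Real.sin φ₁ * ∫ y in (0:ℝ)..(π/2),
        √(1 - Real.cos φ₂ ^ 2 * Real.sin y ^ 2) * Real.sin y ^ 4 * Real.sin φ₂ ^ 2)
      = (3 / (8 * π ^ 2)) * Real.sin φ₁ * (3 * π ^ 2 / 64 * ∑' k, Gt k) := fun a => by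
    rw [intervalIntegral.integral_const_mul, K_eq]
  simp_rw [e2, intervalIntegral.integral_mul_const, intervalIntegral.integral_const_mul]
  simp only [intervalIntegral.integral_const, integral_sin, smul_eq_mul, Real.cos_zero, Real.cos_pi_div_two]
  ring

lemma I_eq : (∫ _θ in (0:ℝ)..(π/2), ∫ φ₁ in (0:ℝ)..(π/2), ∫ φ₂ in (0:ℝ)..(π/2),
              ∫ φ₃ in (0:ℝ)..(π/2),
              (1 - Real.cos φ₃ ^ 2) * (3 / (8 * π ^ 2)) *
                (Real.sin φ₁ * Real.sin φ₂ ^ 2 * Real.sin φ₃ ^ 3)) = 1 / 40 := by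
  have e : ∀ φ₁ φ₂ φ₃ : ℝ, (1 - Real.cos φ₃ ^ 2) * (3 / (8 * π ^ 2)) *
                (Real.sin φ₁ * Real.sin φ₂ ^ 2 * Real.sin φ₃ ^ 3)
      = (3 / (8 * π ^ 2)) * Real.sin φ₁ * (Real.sin φ₂ ^ 2 * Real.sin φ₃ ^ (3 + 2)) := by
    intro a b c
    rw [← Real.sin_sq]; ring
  have h2 : ∫ x in (0:ℝ)..(π/2), Real.sin x ^ 2 = π / 4 := by
    have := int_sin 1
    rw [w_succ, w_zero] at this
    norm_num at this
    rw [integral_sin_sq]; simp; ring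
  simp_rw [e, intervalIntegral.integral_const_mul, intervalIntegral.integral_mul_const,
    integral_sin_pow 3, integral_sin_pow_three, h2]
  simp [intervalIntegral.integral_const_mul]
  field_simp
  norm_num

end MW

/-- The second moment `E(mw²)` of the mean width of the projection of a unit 5-cube
onto a uniformly random 4-subspace of `ℝ⁵`:
`32·(4/(3π))²·(5I + 20J) = (4/(81π⁴))·[144π² − 10Γ(1/4)⁴ + 45π³(8·₃F₂(−1/2,1/2,3/2;1,2;1) − ₃F₂(−1/2,1/2,3/2;1,3;1))]`. -/
theorem second_moment_mean_width_projection_5cube :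
    32 * (4 / (3 * π)) ^ 2 *
      (5 * (∫ _θ in (0:ℝ)..(π/2), ∫ φ₁ in (0:ℝ)..(π/2), ∫ φ₂ in (0:ℝ)..(π/2),
              ∫ φ₃ in (0:ℝ)..(π/2),
              (1 - Real.cos φ₃ ^ 2) * (3 / (8 * π ^ 2)) *
                (Real.sin φ₁ * Real.sin φ₂ ^ 2 * Real.sin φ₃ ^ 3))
        + 20 * (∫ _θ in (0:ℝ)..(π/2), ∫ φ₁ in (0:ℝ)..(π/2), ∫ φ₂ in (0:ℝ)..(π/2),
              ∫ φ₃ in (0:ℝ)..(π/2),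
              Real.sqrt (1 - Real.cos φ₂ ^ 2 * Real.sin φ₃ ^ 2) *
                Real.sqrt (1 - Real.cos φ₃ ^ 2) * (3 / (8 * π ^ 2)) *
                (Real.sin φ₁ * Real.sin φ₂ ^ 2 * Real.sin φ₃ ^ 3)))
    = (4 / (81 * π ^ 4)) *
        (144 * π ^ 2 - 10 * Real.Gamma (1/4) ^ 4 +
          45 * π ^ 3 * (8 * F3F2 2 - F3F2 3)) := by
  rw [MW.I_eq, MW.J_eq]
  have h := MW.relation
  rw [MW.S_eq] at h
  have h2 : ∑' k, MW.Gt k = (-16 * (Real.Gamma (1/4) ^ 4 / (4 * π ^ 3)) + 144 * F3F2 2 - 18 * F3F2 3) / 81 := by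
    linarith
  rw [h2]
  have hpi := Real.pi_pos
  field_simp
  ring
end

section
/- For each fixed u > 0, ∫₀^{1} v⁵ · (4u²(1+u²) + v²)^{−7/2} · (1−v²)^{−1/2} dv = (4/15) · (1+2u²)^{−6} · u^{−1} · (1+u²)^{−1/2}. -/
open Real

theorem aux_deriv (a v : ℝ) (ha : 0 < a) (h0 : 0 < v) (h1 : v < 1) :
    HasDerivAt (fun v : ℝ => -(1 / (a + 1) ^ 3) *
        (√(1 - v ^ 2) / √(a + v ^ 2) - 2 * a / 3 * (√(1 - v ^ 2) / √(a + v ^ 2)) ^ 3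
          + a ^ 2 / 5 * (√(1 - v ^ 2) / √(a + v ^ 2)) ^ 5))
      (v ^ 5 / ((a + v ^ 2) ^ ((7:ℝ)/2) * √(1 - v ^ 2))) v := by
  have hs : 0 < a + v ^ 2 := by positivity
  have hw : 0 < 1 - v ^ 2 := by nlinarith
  have hp : (a + v ^ 2) ^ ((7:ℝ)/2) = √(a + v ^ 2) ^ 7 := by
    rw [Real.sqrt_eq_rpow, ← Real.rpow_natCast _ 7, ← Real.rpow_mul hs.le]
    norm_num
  have d1 : HasDerivAt (fun v : ℝ => √(1 - v ^ 2)) (-(2 * v) / (2 * √(1 - v ^ 2))) v := by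
    have : HasDerivAt (fun v : ℝ => 1 - v ^ 2) (-(2 * v)) v := by
      simpa using (hasDerivAt_pow 2 v).const_sub 1
    exact this.sqrt hw.ne'
  have d2 : HasDerivAt (fun v : ℝ => √(a + v ^ 2)) ((2 * v) / (2 * √(a + v ^ 2))) v := by
    have : HasDerivAt (fun v : ℝ => a + v ^ 2) (2 * v) v := by
      simpa using (hasDerivAt_pow 2 v).const_add a
    exact this.sqrt hs.ne'
  have d3 := d1.div d2 (Real.sqrt_pos.2 hs).ne'
  have d4 := (((d3.sub ((d3.pow 3).const_mul (2 * a / 3))).add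
    ((d3.pow 5).const_mul (a ^ 2 / 5))).const_mul (-(1 / (a + 1) ^ 3)))
  refine d4.congr_deriv ?_
  rw [hp]
  have es := Real.sq_sqrt hs.le
  have ew := Real.sq_sqrt hw.le
  have ps := Real.sqrt_pos.2 hs
  have pw := Real.sqrt_pos.2 hw
  simp only [Pi.div_apply]
  generalize √(a + v ^ 2) = s at *
  generalize √(1 - v ^ 2) = w at *
  have e1 : (-(2 * v) / (2 * w) * s - w * (2 * v / (2 * s))) / s ^ 2
      = - (v * (a + 1)) / (w * s ^ 3) := by
    field_simp
    linear_combination (-1) * es - ew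
  have e2 : 1 - a * (w / s) ^ 2 = v ^ 2 * (a + 1) / s ^ 2 := by
    field_simp
    linear_combination es - a * ew
  rw [e1]
  have e3 : ∀ t D : ℝ, D - 2 * a / 3 * (((3:ℕ):ℝ) * t ^ (3 - 1) * D)
      + a ^ 2 / 5 * (((5:ℕ):ℝ) * t ^ (5 - 1) * D) = (1 - a * t ^ 2) ^ 2 * D := by
    intro t D
    push_cast
    norm_num
    ring
  rw [e3, e2]
  have : a + 1 ≠ 0 := by positivity
  field_simp

/-- The key inner-integral evaluation in the proof that `ζ₅ = ζ₄`: for every `u > 0`,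
`∫₀¹ v⁵/([4u²(1+u²)+v²]^{7/2} √(1−v²)) dv = (4/15)·1/((1+2u²)⁶ u √(1+u²))`. -/
theorem inner_integral_zeta5_eq_zeta4 (u : ℝ) (hu : 0 < u) :
    ∫ v in (0:ℝ)..1,
        v ^ 5 / ((4 * u ^ 2 * (1 + u ^ 2) + v ^ 2) ^ ((7:ℝ)/2) *
          Real.sqrt (1 - v ^ 2))
      = (4/15) * (1 / ((1 + 2 * u ^ 2) ^ 6 * u * Real.sqrt (1 + u ^ 2))) := by
  have ha : 0 < 4 * u ^ 2 * (1 + u ^ 2) := by positivity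
  have hsq : √(4 * u ^ 2 * (1 + u ^ 2)) = 2 * u * √(1 + u ^ 2) := by
    rw [Real.sqrt_mul (by positivity), show 4 * u ^ 2 = (2 * u) ^ 2 by ring,
      Real.sqrt_sq (by positivity)]
  have hB : 4 * u ^ 2 * (1 + u ^ 2) + 1 = (1 + 2 * u ^ 2) ^ 2 := by ring
  have hder := fun v (hv : v ∈ Set.Ioo (0:ℝ) 1) => aux_deriv _ v ha hv.1 hv.2
  have hcont : ContinuousOn (fun v : ℝ => -(1 / (4 * u ^ 2 * (1 + u ^ 2) + 1) ^ 3) *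
        (√(1 - v ^ 2) / √(4 * u ^ 2 * (1 + u ^ 2) + v ^ 2)
          - 2 * (4 * u ^ 2 * (1 + u ^ 2)) / 3 *
            (√(1 - v ^ 2) / √(4 * u ^ 2 * (1 + u ^ 2) + v ^ 2)) ^ 3
          + (4 * u ^ 2 * (1 + u ^ 2)) ^ 2 / 5 *
            (√(1 - v ^ 2) / √(4 * u ^ 2 * (1 + u ^ 2) + v ^ 2)) ^ 5)) (Set.Icc 0 1) := by
    have : Continuous (fun v : ℝ => √(1 - v ^ 2) / √(4 * u ^ 2 * (1 + u ^ 2) + v ^ 2)) := by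
      refine Continuous.div (by fun_prop) (by fun_prop) fun v => ?_
      positivity
    fun_prop
  rw [intervalIntegral.integral_eq_sub_of_hasDerivAt_of_le zero_le_one hcont hder]
  · have h1 : √(1 - (1:ℝ) ^ 2) = 0 := by norm_num
    have h0 : √(1 - (0:ℝ) ^ 2) = 1 := by norm_num
    have h2 : √(4 * u ^ 2 * (1 + u ^ 2) + (0:ℝ) ^ 2) = 2 * u * √(1 + u ^ 2) := by
      rw [← hsq]; norm_num
    simp only [h1, h0, h2, hB]
    have hr : 0 < √(1 + u ^ 2) := by positivity
    have er : √(1 + u ^ 2) ^ 2 = 1 + u ^ 2 := Real.sq_sqrt (by positivity)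
    generalize √(1 + u ^ 2) = r at hr er ⊢
    rw [← er]
    simp only [zero_div]
    field_simp
    ring
  · apply intervalIntegral.intervalIntegrable_deriv_of_nonneg
    · rw [Set.uIcc_of_le zero_le_one]; exact hcont
    · simpa using hder
    · intro v hv
      simp at hv
      have := hv.1
      positivity
end
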